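/- arXiv:2409.07700 — 3 statements merged into one kernel-verified Lean document; each statement's English description precedes it below -/
import Mathlib

section
/- Let X be a set and φ : ℝ≥0 → X → X a map satisfying φ(0, x) = x and the semigroup (recursive) property φ(τ + ϑ, x) = φ(τ, φ(ϑ, x)) for all τ, ϑ ≥ 0 and x ∈ X. Let Cs, Cb ⊆ X with Cb ⊆ Cs, and suppose Cb is forward invariant under φ, i.e. x ∈ Cb implies φ(t, x) ∈ Cb for all t ≥ 0. Fix T > 0 and define Cd = {x ∈ X : φ(τ, x) ∈ Cs for all τ ∈ [0,T], and φ(T, x) ∈ Cb}. Then Cd is forward invariant under φ: x ∈ Cd implies φ(ϑ, x) ∈ Cd for all ϑ ≥ 0. -/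
/-!
By the semigroup property, the trajectory from `φ ϑ x` is the trajectory from `x` shifted by `ϑ`.
The trajectory from `x` is in `Cs` up to time `T`, and in `Cb ⊆ Cs` from time `T` on, because `Cb`
is forward invariant; so every later point of it again satisfies both conditions defining `Cd`.
-/

/-- Lemma 3: the implicitly defined set `Cd` (states whose disturbed backup
trajectory stays in `Cs` on `[0,T]` and reaches `Cb` at time `T`) is forward
invariant under the disturbed flow `φ`. -/
theorem Cd_forward_invariant
    {X : Type*} (φ : ℝ → X → X)
    (hφ0 : ∀ x : X, φ 0 x = x)
    (hsemi : ∀ τ ϑ : ℝ, 0 ≤ τ → 0 ≤ ϑ → ∀ x : X, φ (τ + ϑ) x = φ τ (φ ϑ x))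
    (Cs Cb : Set X) (hsub : Cb ⊆ Cs)
    (hCbInv : ∀ x ∈ Cb, ∀ t : ℝ, 0 ≤ t → φ t x ∈ Cb)
    (T : ℝ) (hT : 0 < T) :
    ∀ x ∈ {x : X | (∀ τ ∈ Set.Icc (0:ℝ) T, φ τ x ∈ Cs) ∧ φ T x ∈ Cb},
      ∀ ϑ : ℝ, 0 ≤ ϑ →
        φ ϑ x ∈ {x : X | (∀ τ ∈ Set.Icc (0:ℝ) T, φ τ x ∈ Cs) ∧ φ T x ∈ Cb} := by
  rintro x ⟨hs, hb⟩ ϑ hϑ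
  -- Once the trajectory has reached `Cb` at time `T`, it remains there.
  have late : ∀ s : ℝ, T ≤ s → φ s x ∈ Cb := by
    intro s hTs
    have h := hCbInv _ hb (s - T) (sub_nonneg.mpr hTs)
    rwa [← hsemi _ _ (sub_nonneg.mpr hTs) hT.le, sub_add_cancel] at h
  refine ⟨fun τ hτ => ?_, ?_⟩
  · rw [← hsemi τ ϑ hτ.1 hϑ]
    rcases le_total (τ + ϑ) T with h | h
    · exact hs _ ⟨add_nonneg hτ.1 hϑ, h⟩
    · exact hsub (late _ h)
  · rw [← hsemi T ϑ hT.le hϑ]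
    exact late _ (le_add_of_nonneg_right hϑ)
end

section
/- Let α : ℝ → ℝ be locally Lipschitz with α(0) = 0, and let z : [0, ∞) → ℝ be differentiable with z'(t) ≥ −α(z(t)) for all t ≥ 0. If z(0) ≥ 0, then z(t) ≥ 0 for all t ≥ 0. -/
/-!
If `z t < 0`, let `s` be the last time in `[0, t]` at which `z` is nonnegative. Just to the right
of `s` the values of `z` are negative and close to `0`, where `α` is `K`-Lipschitz, so that
`z' ≥ -α z ≥ -K |z| = K z` there. Hence `u ↦ z u * exp (-K u)` is nondecreasing on a short interval
`[s, r]`, and `z s ≥ 0` forces `z r ≥ 0`, a contradiction. The Lipschitz bound is needed only near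
`0`.
-/

/-- Scalar comparison principle underlying the CBF forward-invariance theorem
(Theorem 1): a barrier value `z` with `ż(t) ≥ −α(z(t))` for a locally Lipschitz
function `α` with `α(0) = 0`, starting nonnegative, remains nonnegative. -/
theorem barrier_comparison_principle
    (α : ℝ → ℝ) (hα : LocallyLipschitz α) (hα0 : α 0 = 0)
    (z z' : ℝ → ℝ)
    (hderiv : ∀ t : ℝ, 0 ≤ t → HasDerivAt z (z' t) t)
    (hineq : ∀ t : ℝ, 0 ≤ t → z' t ≥ -α (z t))
    (h0 : z 0 ≥ 0) :
    ∀ t : ℝ, 0 ≤ t → z t ≥ 0 := by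
  intro t ht
  by_contra! hzt
  obtain ⟨K, U, hU, hK⟩ := hα 0
  obtain ⟨δ, hδ, hball⟩ := Metric.mem_nhds_iff.1 hU
  have hbound : ∀ x, -δ < x → x < 0 → α x ≤ -(K * x) := by
    intro x hx1 hx2
    have hxU : x ∈ U := hball (by rw [mem_ball_zero_iff, Real.norm_eq_abs, abs_lt]; grind)
    have h := hK.dist_le_mul x hxU 0 (mem_of_mem_nhds hU)
    rw [Real.dist_eq, Real.dist_eq, hα0, sub_zero, sub_zero, abs_of_neg hx2] at h
    linarith [le_abs_self (α x)]
  have hcont : ContinuousOn z (Set.Icc 0 t) :=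
    fun u hu => (hderiv u hu.1).continuousAt.continuousWithinAt
  have hcompact : IsCompact (Set.Icc 0 t ∩ z ⁻¹' Set.Ici 0) :=
    isCompact_Icc.of_isClosed_subset
      (hcont.preimage_isClosed_of_isClosed isClosed_Icc isClosed_Ici) Set.inter_subset_left
  obtain ⟨s, ⟨⟨hs0, hst⟩, hzs⟩, hsmax⟩ := hcompact.exists_isGreatest ⟨0, ⟨le_rfl, ht⟩, h0⟩
  replace hzs : 0 ≤ z s := hzs
  have hst' : s < t := lt_of_le_of_ne hst (by rintro rfl; linarith)
  have hneg : ∀ u, s < u → u ≤ t → z u < 0 := by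
    intro u hsu hut
    by_contra! hu
    exact absurd (hsmax ⟨⟨hs0.trans hsu.le, hut⟩, hu⟩) (not_le.2 hsu)
  -- Since `z s ≥ 0 > -δ`, continuity keeps `z` above `-δ` near `s`.
  obtain ⟨ε, hε, hnear⟩ := Metric.eventually_nhds_iff.1
    ((hderiv s hs0).continuousAt.eventually (lt_mem_nhds (show -δ < z s by linarith)))
  obtain ⟨r, hsr, hr⟩ := exists_between (lt_min hst' (show s < s + ε by linarith))
  obtain ⟨hrt, hrε⟩ := lt_min_iff.1 hr
  have hg : ∀ u, 0 ≤ u → HasDerivAt (fun u => z u * Real.exp (-K * u))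
      ((z' u - K * z u) * Real.exp (-K * u)) u := by
    intro u hu
    have hexp : HasDerivAt (fun u => Real.exp (-K * u)) (Real.exp (-K * u) * (-K * 1)) u :=
      ((hasDerivAt_id' u).const_mul (-(K : ℝ))).exp
    exact ((hderiv u hu).mul hexp).congr_deriv (by ring)
  have hmono : MonotoneOn (fun u => z u * Real.exp (-K * u)) (Set.Icc s r) := by
    apply monotoneOn_of_hasDerivWithinAt_nonneg (convex_Icc s r)
      (f' := fun u => (z' u - K * z u) * Real.exp (-K * u))
    · exact fun u hu => (hg u (hs0.trans hu.1)).continuousAt.continuousWithinAt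
    · intro u hu
      rw [interior_Icc] at hu
      exact (hg u (hs0.trans hu.1.le)).hasDerivWithinAt
    · intro u hu
      rw [interior_Icc] at hu
      have h1 := hbound (z u)
        (hnear (by rw [Real.dist_eq, abs_of_pos (sub_pos.2 hu.1)]; linarith [hu.2]))
        (hneg u hu.1 (hu.2.trans hrt).le)
      have h2 := hineq u (hs0.trans hu.1.le)
      exact mul_nonneg (by linarith) (Real.exp_pos _).le
  have hle := hmono (Set.left_mem_Icc.2 hsr.le) (Set.right_mem_Icc.2 hsr.le) hsr.le
  have hl : 0 ≤ z s * Real.exp (-K * s) := mul_nonneg hzs (Real.exp_pos _).le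
  have hrneg := mul_neg_of_neg_of_pos (hneg r hsr hrt.le) (Real.exp_pos (-K * r))
  exact absurd (hl.trans hle) (not_le.2 hrneg)
end

section
/- Let E be a real normed vector space of dimension n, and let f : E → E and g : E → (ℝ^m →ₗ E) be the drift and input maps of the control-affine system. Let ξ ≥ 0 and T > 0. Let φn : [0,T] × E → E be the nominal backup flow and suppose that for each τ ∈ [0,T] the map x ↦ φn(τ, x) is differentiable with (Fréchet) derivative Φ(τ, x). Let h, h_b : E → ℝ be continuously differentiable, and let α, α_b : ℝ → ℝ be locally Lipschitz, strictly increasing functions with α(0) = α_b(0) = 0. Let ε : [0,T] → ℝ and ε_b ∈ ℝ be given constants. Let x : [0,∞) → E be differentiable with x'(t) = f(x(t)) + g(x(t)) u(t) + d(t) where u : [0,∞) → ℝ^m and d : [0,∞) → E satisfies ‖d(t)‖ ≤ ξ for all t. Suppose that for all t ≥ 0 and all τ ∈ [0,T]: ∇h(φn(τ, x(t))) ∘ Φ(τ, x(t)) applied to (f(x(t)) + g(x(t)) u(t)), minus ξ‖∇h(φn(τ,x(t))) ∘ Φ(τ,x(t))‖, is ≥ −α(h(φn(τ, x(t))) − ε(τ));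 and ∇h_b(φn(T, x(t))) ∘ Φ(T, x(t)) applied to (f(x(t)) + g(x(t)) u(t)), minus ξ‖∇h_b(φn(T,x(t))) ∘ Φ(T,x(t))‖, is ≥ −α_b(h_b(φn(T, x(t))) − ε_b). If h(φn(τ, x(0))) ≥ ε(τ) for all τ ∈ [0,T] and h_b(φn(T, x(0))) ≥ ε_b, then for all t ≥ 0, h(φn(τ, x(t))) ≥ ε(τ) for all τ ∈ [0,T] and h_b(φn(T, x(t))) ≥ ε_b (i.e., x(t) remains in the set Ci for all t ≥ 0). -/
/-!
The set `{h ∘ φn τ ≥ ε τ}` is treated one `τ` at a time. Along the trajectory put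
`ψ t = h (φn τ (x t)) - ε τ`. By the chain rule `ψ' = L (f + g u) + L d`, where
`L = ∇h ∘ Φ`, and `L d ≥ -ξ ‖L‖`, so the robustified constraint gives `ψ' ≥ -α ψ`
(`robust_barrier`). Since `α` is strictly increasing with `α 0 = 0`, this makes `ψ` strictly
increasing wherever it is negative, so `ψ` can never fall to a level `-δ < 0` when `ψ 0 ≥ 0`
(`nonneg_of_deriv_ge`).
-/

/-- Scalar comparison principle: for each `δ > 0`, `-ψ` cannot cross the constant barrier `δ`,
because at a crossing `(-ψ)' ≤ α (-δ) < 0`. -/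
theorem nonneg_of_deriv_ge {α ψ ψ' : ℝ → ℝ} (hα : StrictMono α) (hα0 : α 0 = 0)
    (hψ : ∀ t, 0 ≤ t → HasDerivAt ψ (ψ' t) t) (hge : ∀ t, 0 ≤ t → -α (ψ t) ≤ ψ' t)
    (h0 : 0 ≤ ψ 0) {t : ℝ} (ht : 0 ≤ t) : 0 ≤ ψ t := by
  refine le_of_forall_pos_le_add fun δ hδ => ?_
  have key : -ψ t ≤ δ := by
    refine image_le_of_deriv_right_lt_deriv_boundary (f := fun s => -ψ s)
      (f' := fun s => -ψ' s) (a := 0) (b := t) (B := fun _ => δ) (B' := fun _ => 0)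
      (fun s hs => (hψ s hs.1).neg.continuousAt.continuousWithinAt)
      (fun s hs => (hψ s hs.1).neg.hasDerivWithinAt) (by linarith)
      (fun s => hasDerivAt_const s δ) (fun s hs heq => ?_) ⟨ht, le_rfl⟩
    have hlt : α (ψ s) < α 0 := hα (by linarith)
    have := hge s hs.1
    linarith
  linarith

/-- Forward invariance of a single superlevel set `{k ∘ φ ≥ c}` under the robustified constraint;
`v t` is the undisturbed velocity of the trajectory. -/
theorem robust_barrier {E : Type*} [NormedAddCommGroup E] [NormedSpace ℝ E]
    {φ : E → E} {Φ : E → E →L[ℝ] E} (hΦ : ∀ y, HasFDerivAt φ (Φ y) y)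
    {k : E → ℝ} (hk : ContDiff ℝ 1 k) {α : ℝ → ℝ} (hα : StrictMono α) (hα0 : α 0 = 0)
    {c ξ : ℝ} {x v d : ℝ → E} (hd : ∀ t, 0 ≤ t → ‖d t‖ ≤ ξ)
    (hx : ∀ t, 0 ≤ t → HasDerivAt x (v t + d t) t)
    (hcon : ∀ t, 0 ≤ t → ((fderiv ℝ k (φ (x t))).comp (Φ (x t))) (v t)
      - ξ * ‖(fderiv ℝ k (φ (x t))).comp (Φ (x t))‖ ≥ -α (k (φ (x t)) - c))
    (h0 : k (φ (x 0)) ≥ c) {t : ℝ} (ht : 0 ≤ t) : k (φ (x t)) ≥ c := by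
  have hpos := nonneg_of_deriv_ge (ψ := fun s => k (φ (x s)) - c)
    (ψ' := fun s => ((fderiv ℝ k (φ (x s))).comp (Φ (x s))) (v s + d s)) hα hα0
    (fun s hs => ?_) (fun s hs => ?_) (sub_nonneg.2 h0) ht
  · exact sub_nonneg.1 hpos
  · have hkd := (hk.differentiable one_ne_zero (φ (x s))).hasFDerivAt
    exact ((hkd.comp (x s) (hΦ (x s))).comp_hasDerivAt s (hx s hs)).sub_const c
  · set L := (fderiv ℝ k (φ (x s))).comp (Φ (x s))
    have hc := hcon s hs
    have hLd : |L (d s)| ≤ ‖L‖ * ξ :=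
      (L.le_opNorm (d s)).trans (mul_le_mul_of_nonneg_left (hd s hs) (norm_nonneg L))
    have := (abs_le.1 hLd).1
    simp only [map_add]
    linarith

/-- Theorem 5 (main result): any control signal satisfying the robustified
backup CBF constraints renders the tightened implicit set `Ci` forward
invariant along the disturbed closed-loop trajectory `x(t)` for every
disturbance bounded in norm by `ξ`. -/
theorem dr_bcbf_main
    {E : Type*} [NormedAddCommGroup E] [NormedSpace ℝ E] [FiniteDimensional ℝ E]
    (n m : ℕ) (hdim : Module.finrank ℝ E = n)
    (f : E → E) (g : E → (Fin m → ℝ) →ₗ[ℝ] E)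
    (ξ : ℝ) (hξ : 0 ≤ ξ) (T : ℝ) (hT : 0 < T)
    (φn : ℝ → E → E) (Φ : ℝ → E → E →L[ℝ] E)
    (hΦ : ∀ τ ∈ Set.Icc (0:ℝ) T, ∀ y : E, HasFDerivAt (φn τ) (Φ τ y) y)
    (h hb : E → ℝ) (hh : ContDiff ℝ 1 h) (hhb : ContDiff ℝ 1 hb)
    (α αb : ℝ → ℝ)
    (hαLip : LocallyLipschitz α) (hαbLip : LocallyLipschitz αb)
    (hαmono : StrictMono α) (hαbmono : StrictMono αb)
    (hα0 : α 0 = 0) (hαb0 : αb 0 = 0)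
    (ε : ℝ → ℝ) (εb : ℝ)
    (x : ℝ → E) (u : ℝ → Fin m → ℝ) (d : ℝ → E)
    (hd : ∀ t : ℝ, 0 ≤ t → ‖d t‖ ≤ ξ)
    (hx : ∀ t : ℝ, 0 ≤ t → HasDerivAt x (f (x t) + g (x t) (u t) + d t) t)
    (hcon : ∀ t : ℝ, 0 ≤ t → ∀ τ ∈ Set.Icc (0:ℝ) T,
      ((fderiv ℝ h (φn τ (x t))).comp (Φ τ (x t))) (f (x t) + g (x t) (u t))
          - ξ * ‖(fderiv ℝ h (φn τ (x t))).comp (Φ τ (x t))‖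
        ≥ -α (h (φn τ (x t)) - ε τ))
    (hconb : ∀ t : ℝ, 0 ≤ t →
      ((fderiv ℝ hb (φn T (x t))).comp (Φ T (x t))) (f (x t) + g (x t) (u t))
          - ξ * ‖(fderiv ℝ hb (φn T (x t))).comp (Φ T (x t))‖
        ≥ -αb (hb (φn T (x t)) - εb))
    (hinit : (∀ τ ∈ Set.Icc (0:ℝ) T, h (φn τ (x 0)) ≥ ε τ) ∧ hb (φn T (x 0)) ≥ εb) :
    ∀ t : ℝ, 0 ≤ t →
      (∀ τ ∈ Set.Icc (0:ℝ) T, h (φn τ (x t)) ≥ ε τ) ∧ hb (φn T (x t)) ≥ εb := by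
  intro t ht
  exact ⟨fun τ hτ => robust_barrier (hΦ τ hτ) hh hαmono hα0 hd hx
      (fun s hs => hcon s hs τ hτ) (hinit.1 τ hτ) ht,
    robust_barrier (hΦ T ⟨hT.le, le_rfl⟩) hhb hαbmono hαb0 hd hx hconb hinit.2 ht⟩
end
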